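/- arXiv:2409.06810 — 4 statements merged into one kernel-verified Lean document; each statement's English description precedes it below -/
import Mathlib

section
/- Let s, k ≥ 2 be integers with s ≥ 2k, and let F be an s-super-homogeneous k-partite k-graph on [n] with a fixed k-partition (X_1,...,X_k). Then MI(F) is closed under intersection: for all J, J' ∈ MI(F), also J ∩ J' ∈ MI(F). -/
open Finset Filter

attribute [local instance] Classical.propDecidable

/-- The vertex set `[n] = {1,…,n}`. -/
def vtx (n : ℕ) : Finset ℕ := Finset.Icc 1 n

/-- `F` is a `k`-graph on `[n]`: a family of `k`-element subsets of `[n]`. -/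
def IsKGraphOn (k n : ℕ) (F : Finset (Finset ℕ)) : Prop :=
  ∀ E ∈ F, E ⊆ vtx n ∧ E.card = k

/-- The vertex set of a hypergraph (union of its edges). -/
def vertexSet {α : Type} [DecidableEq α] (H : Finset (Finset α)) : Finset α := H.sup id

/-- The degree of a vertex: the number of edges containing it. -/
def vdeg {α : Type} [DecidableEq α] (H : Finset (Finset α)) (v : α) : ℕ :=
  (H.filter fun E => v ∈ E).card

/-- Hypertrees, defined recursively: a single edge is a hypertree, and a hypertree grows
by adding a new leaf edge `E` whose intersection with the current vertex set equals its
intersection with some existing (parent) edge `F`. -/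
inductive IsHypertree {α : Type} [DecidableEq α] : Finset (Finset α) → Prop
  | single (E : Finset α) : IsHypertree {E}
  | grow {H : Finset (Finset α)} (E F : Finset α) (hH : IsHypertree H) (hE : E ∉ H)
      (hF : F ∈ H) (hint : E ∩ vertexSet H = E ∩ F) : IsHypertree (insert E H)

/-- A `k`-tree: a `k`-uniform hypertree. -/
def IsKTree {α : Type} [DecidableEq α] (k : ℕ) (H : Finset (Finset α)) : Prop :=
  IsHypertree H ∧ ∀ E ∈ H, E.card = k

/-- A hypergraph is 2-contractible if every edge contains at least two vertices of degree 1. -/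
def TwoContractible {α : Type} [DecidableEq α] (H : Finset (Finset α)) : Prop :=
  ∀ E ∈ H, 2 ≤ (E.filter fun v => vdeg H v = 1).card

/-- `S` is a cross-cut of `H`: every edge meets `S` in exactly one vertex. -/
def IsCrosscut {α : Type} [DecidableEq α] (H : Finset (Finset α)) (S : Finset α) : Prop :=
  ∀ E ∈ H, (E ∩ S).card = 1

/-- `σ` is the cross-cut number of `H`: the minimum size of a cross-cut. -/
def IsCrosscutNumber {α : Type} [DecidableEq α] (H : Finset (Finset α)) (σ : ℕ) : Prop :=
  IsLeast {m | ∃ S : Finset α, IsCrosscut H S ∧ S.card = m} σ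

/-- A hypergraph is `ℓ`-overlapping if any two distinct edges meet in at most `ℓ` vertices. -/
def Overlapping {α : Type} [DecidableEq α] (ℓ : ℕ) (H : Finset (Finset α)) : Prop :=
  ∀ E ∈ H, ∀ F ∈ H, E ≠ F → (E ∩ F).card ≤ ℓ

/-- `K` is (the edge set of) a copy of `H`, i.e. the image of `H` under a map that is
injective on the vertex set of `H`. -/
def IsCopyOf {α : Type} [DecidableEq α] (H : Finset (Finset α)) (K : Finset (Finset ℕ)) : Prop :=
  ∃ φ : α → ℕ, Set.InjOn φ ↑(vertexSet H) ∧ K = H.image fun E => E.image φ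

/-- `F` contains no subgraph isomorphic to `H`. -/
def HFree {α : Type} [DecidableEq α] (H : Finset (Finset α)) (F : Finset (Finset ℕ)) : Prop :=
  ∀ K ⊆ F, ¬ IsCopyOf H K

/-- The collection of copies of `H` in `F` (as distinct subgraphs of `F`). -/
noncomputable def copies {α : Type} [DecidableEq α] (H : Finset (Finset α))
    (F : Finset (Finset ℕ)) : Finset (Finset (Finset ℕ)) :=
  F.powerset.filter (IsCopyOf H)

/-- The number of `H`-free `k`-graphs on the vertex set `[n]`. -/
noncomputable def forb {α : Type} [DecidableEq α] (n k : ℕ) (H : Finset (Finset α)) : ℕ :=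
  (((vtx n).powersetCard k).powerset.filter (HFree H)).card

/-- `H` is a `k`-uniform linear cycle of length `ℓ`. -/
def IsLinearCycle {α : Type} [DecidableEq α] (k ℓ : ℕ) (H : Finset (Finset α)) : Prop :=
  ∃ E : ℕ → Finset α,
    (∀ i < ℓ, (E i).card = k) ∧
    (∀ i < ℓ, ∀ j < ℓ, i ≠ j → E i ≠ E j) ∧
    (∀ i < ℓ, (E i ∩ E ((i + 1) % ℓ)).card = 1) ∧
    (∀ i < ℓ, ∀ j < ℓ, i ≠ j → E i ∩ E ((i + 1) % ℓ) ≠ E j ∩ E ((j + 1) % ℓ)) ∧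
    (∀ i < ℓ, ∀ j < ℓ, i ≠ j → (i + 1) % ℓ ≠ j → (j + 1) % ℓ ≠ i → Disjoint (E i) (E j)) ∧
    H = (Finset.range ℓ).image E

/-- `(X 0, …, X (k-1))` is a `k`-partition of `F`. -/
def IsKPartition (k : ℕ) (F : Finset (Finset ℕ)) (X : Fin k → Finset ℕ) : Prop :=
  (∀ i j, i ≠ j → Disjoint (X i) (X j)) ∧ ∀ E ∈ F, ∀ i, (E ∩ X i).card = 1

/-- The `J`-projection of an edge. -/
def projJ {k : ℕ} (X : Fin k → Finset ℕ) (J : Finset (Fin k)) (E : Finset ℕ) : Finset ℕ :=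
  E ∩ J.sup X

/-- The pattern of a vertex set. -/
def pattern {k : ℕ} (X : Fin k → Finset ℕ) (D : Finset ℕ) : Finset (Fin k) :=
  Finset.univ.filter fun i => (D ∩ X i).Nonempty

/-- `MI(F)`: the patterns of intersections of pairs of distinct edges. -/
noncomputable def MI {k : ℕ} (F : Finset (Finset ℕ)) (X : Fin k → Finset ℕ) :
    Finset (Finset (Fin k)) :=
  ((F ×ˢ F).filter fun p => p.1 ≠ p.2).image fun p => pattern X (p.1 ∩ p.2)

/-- The link of a vertex set `D` in `F`. -/
def link {α : Type} [DecidableEq α] (F : Finset (Finset α)) (D : Finset α) :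
    Finset (Finset α) :=
  (F.filter fun E => D ⊆ E).image fun E => E \ D

/-- The degree of a vertex set `D` in `F`: the size of its link. -/
def setDeg {α : Type} [DecidableEq α] (F : Finset (Finset α)) (D : Finset α) : ℕ :=
  (link F D).card

/-- A nonempty hypergraph is `s`-diverse if every vertex has degree less than `|H|/s`. -/
def SDiverse {α : Type} [DecidableEq α] (s : ℕ) (H : Finset (Finset α)) : Prop :=
  H.Nonempty ∧ ∀ v : α, s * vdeg H v < H.card

/-- `D` is `s`-strong in `F` if its link is `s`-diverse. -/
def SStrong {α : Type} [DecidableEq α] (s : ℕ) (F : Finset (Finset α)) (D : Finset α) : Prop :=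
  SDiverse s (link F D)

/-- `F`, with `k`-partition `X`, is `s`-super-homogeneous: for every `J ∈ MI(F)` and every
edge `E ∈ F`, the projection `E_J` is `s`-strong and `d_F(E_J) ≥ max{s, |F|/(2k·n^|J|)}`. -/
def SuperHomogeneous (n k s : ℕ) (F : Finset (Finset ℕ)) (X : Fin k → Finset ℕ) : Prop :=
  ∀ J ∈ MI F X, ∀ E ∈ F,
    SStrong s F (projJ X J E) ∧
    s ≤ setDeg F (projJ X J E) ∧
    (F.card : ℝ) / (2 * k * (n : ℝ) ^ J.card) ≤ (setDeg F (projJ X J E) : ℝ)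

/-- The rank of a family of subsets of `[k]`: the minimum size of a set `D ⊆ [k]` contained
in no member of the family. -/
noncomputable def rankFam (k : ℕ) (𝒥 : Finset (Finset (Fin k))) : ℕ :=
  sInf {d | ∃ D : Finset (Fin k), D.card = d ∧ ∀ J ∈ 𝒥, ¬ D ⊆ J}

/-- A family of subsets of `[k]` is of type 1 if it contains the full power set of some
`(k-2)`-set `B`. -/
def TypeOne (k : ℕ) (𝒥 : Finset (Finset (Fin k))) : Prop :=
  ∃ B : Finset (Fin k), B.card = k - 2 ∧ ∀ S ⊆ B, S ∈ 𝒥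

/-- The constant `c(k,s) = k!/(k^k·(2s(1+2^k))^(2^k))`. -/
noncomputable def cks (k s : ℕ) : ℝ :=
  (Nat.factorial k : ℝ) / ((k : ℝ) ^ k * (2 * (s : ℝ) * (1 + 2 ^ k)) ^ (2 ^ k))

/-- Degree of a set of vertices in a (uniform) hypergraph `K`: number of edges containing it. -/
def uDeg {α : Type} [DecidableEq α] (K : Finset (Finset α)) (S : Finset α) : ℕ :=
  (K.filter fun e => S ⊆ e).card

/-- A `t`-uniform hypergraph is `d`-graded if `d_K(S) ≤ d^(t-|S|)` for all `S` with
`1 ≤ |S| ≤ t`. -/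
def Graded {α : Type} [DecidableEq α] (t : ℕ) (d : ℝ) (K : Finset (Finset α)) : Prop :=
  ∀ S : Finset α, 1 ≤ S.card → S.card ≤ t → (uDeg K S : ℝ) ≤ d ^ (t - S.card)

/-- `S` is saturated by `K`: `d_K(S) = ⌊d^(t-|S|)⌋`. -/
def Saturated {α : Type} [DecidableEq α] (t : ℕ) (d : ℝ) (K : Finset (Finset α))
    (S : Finset α) : Prop :=
  uDeg K S = ⌊d ^ (t - S.card)⌋₊

/-- `S` is admissible: no nonempty subset of `S` is saturated. -/
def Admissible {α : Type} [DecidableEq α] (t : ℕ) (d : ℝ) (K : Finset (Finset α))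
    (S : Finset α) : Prop :=
  ∀ S' ⊆ S, S'.Nonempty → ¬ Saturated t d K S'

/-- `Z_K(S)`: the vertices `v` such that `S ∪ {v}` is inadmissible and `{v}` is not
saturated. -/
noncomputable def Zset {α : Type} [DecidableEq α] (t : ℕ) (d : ℝ) (K : Finset (Finset α))
    (S : Finset α) : Finset α :=
  (vertexSet K).filter fun v => ¬ Admissible t d K (insert v S) ∧ ¬ Saturated t d K {v}

/-- `ex(G,H)`: the maximum number of edges of an `H`-free subgraph of `G`. -/
noncomputable def exIn {α : Type} [DecidableEq α] (H : Finset (Finset α))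
    (G : Finset (Finset ℕ)) : ℕ :=
  (G.powerset.filter (HFree H)).sup Finset.card

/-- The probability, in the random `k`-graph `G^(k)(n,p)` (each `k`-subset of `[n]` is an
edge independently with probability `p`), of the event `A`. -/
noncomputable def probEvent (k n : ℕ) (p : ℝ) (A : Finset (Finset ℕ) → Prop) : ℝ :=
  ∑ G ∈ ((vtx n).powersetCard k).powerset.filter A,
    p ^ G.card * (1 - p) ^ (((vtx n).powersetCard k).card - G.card)

/-!
Fix an edge `E`. As `E_J` is `s`-strong and `|E| = k ≤ s`, some edge `A` meets `E` exactly in `E_J`.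
In the same way some edge `B` meets `A` exactly in `E_{J'} ∩ A`. Since `E_{J'} ⊆ E`, this gives
`A ∩ B = E_J ∩ E_{J'} = E_{J ∩ J'}`, whose pattern is `J ∩ J'`. If `A` and `B` were equal, this
pattern, and hence `J`, would be all of `[k]`; but two distinct `k`-element edges cannot agree in
all `k` parts.
-/

section Diverse

variable {α : Type} [DecidableEq α] {s : ℕ} {F H : Finset (Finset α)} {D W : Finset α}

theorem card_le_sum_vdeg (hW : ∀ L ∈ H, ¬Disjoint L W) : #H ≤ ∑ v ∈ W, vdeg H v := by
  have hcover : H ⊆ W.biUnion fun v => H.filter fun L => v ∈ L := by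
    intro L hL
    obtain ⟨v, hvL, hvW⟩ := not_disjoint_iff.1 (hW L hL)
    exact mem_biUnion.2 ⟨v, hvW, mem_filter.2 ⟨hL, hvL⟩⟩
  exact (card_le_card hcover).trans card_biUnion_le

theorem SDiverse.exists_disjoint (hH : SDiverse s H) (hW : #W ≤ s) : ∃ L ∈ H, Disjoint L W := by
  by_contra! hmeet
  have hWne : W.Nonempty := by
    obtain ⟨L, hL⟩ := hH.1
    obtain ⟨v, -, hvW⟩ := not_disjoint_iff.1 (hmeet L hL)
    exact ⟨v, hvW⟩
  have hlt : s * #H < s * #H :=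
    calc
      s * #H ≤ s * ∑ v ∈ W, vdeg H v := Nat.mul_le_mul_left s (card_le_sum_vdeg hmeet)
      _ = ∑ v ∈ W, s * vdeg H v := mul_sum ..
      _ < ∑ _v ∈ W, #H := sum_lt_sum_of_nonempty hWne fun v _ => hH.2 v
      _ = #W * #H := by rw [sum_const, smul_eq_mul]
      _ ≤ s * #H := Nat.mul_le_mul_right _ hW
  exact hlt.false

theorem SStrong.exists_inter_eq (hD : SStrong s F D) (hW : #W ≤ s) : ∃ B ∈ F, B ∩ W = D ∩ W := by
  obtain ⟨L, hL, hLW⟩ := SDiverse.exists_disjoint hD hW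
  obtain ⟨B, hB, rfl⟩ := mem_image.1 hL
  obtain ⟨hBF, hDB⟩ := mem_filter.1 hB
  refine ⟨B, hBF, ?_⟩
  rw [← union_sdiff_of_subset hDB, union_inter_distrib_right, disjoint_iff_inter_eq_empty.1 hLW,
    union_empty]

end Diverse

section Pattern

open scoped Function

variable {k : ℕ} {X : Fin k → Finset ℕ} {D E : Finset ℕ} {F : Finset (Finset ℕ)}
  {J J' : Finset (Fin k)} {i : Fin k} {v : ℕ}

theorem mem_pattern : i ∈ pattern X D ↔ ∃ v ∈ D, v ∈ X i := by
  simp only [pattern, mem_filter_univ, Finset.Nonempty, mem_inter]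

theorem mem_projJ : v ∈ projJ X J E ↔ v ∈ E ∧ ∃ i ∈ J, v ∈ X i := by
  rw [projJ, mem_inter, Finset.mem_sup]

theorem mem_MI :
    J ∈ MI F X ↔ ∃ E ∈ F, ∃ E' ∈ F, E ≠ E' ∧ pattern X (E ∩ E') = J := by
  simp only [MI, mem_image, mem_filter, mem_product, Prod.exists, and_assoc, exists_and_left]

theorem projJ_subset : projJ X J E ⊆ E :=
  inter_subset_left

theorem IsKPartition.pairwise_disjoint (h : IsKPartition k F X) : Pairwise (Disjoint on X) :=
  fun i j => h.1 i j

theorem IsKPartition.pattern_eq_univ (h : IsKPartition k F X) (hE : E ∈ F) :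
    pattern X E = univ :=
  filter_true_of_mem fun i _ => card_pos.1 (by rw [h.2 E hE i]; exact one_pos)

theorem part_eq_of_mem (hX : Pairwise (Disjoint on X)) {j : Fin k} (hi : v ∈ X i)
    (hj : v ∈ X j) : i = j :=
  hX.eq (not_disjoint_iff.2 ⟨v, hi, hj⟩)

theorem projJ_inter_projJ (hX : Pairwise (Disjoint on X)) :
    projJ X J E ∩ projJ X J' E = projJ X (J ∩ J') E := by
  ext v
  simp only [mem_inter, mem_projJ]
  constructor
  · rintro ⟨⟨hvE, i, hiJ, hvi⟩, -, j, hjJ', hvj⟩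
    obtain rfl := part_eq_of_mem hX hvi hvj
    exact ⟨hvE, i, ⟨hiJ, hjJ'⟩, hvi⟩
  · rintro ⟨hvE, i, ⟨hiJ, hiJ'⟩, hvi⟩
    exact ⟨⟨hvE, i, hiJ, hvi⟩, hvE, i, hiJ', hvi⟩

theorem pattern_projJ (hX : Pairwise (Disjoint on X)) :
    pattern X (projJ X J D) = J ∩ pattern X D := by
  ext i
  simp only [mem_inter, mem_pattern, mem_projJ]
  constructor
  · rintro ⟨v, ⟨hvD, j, hjJ, hvj⟩, hvi⟩
    obtain rfl := part_eq_of_mem hX hvi hvj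
    exact ⟨hjJ, v, hvD, hvi⟩
  · rintro ⟨hiJ, v, hvD, hvi⟩
    exact ⟨v, ⟨hvD, i, hiJ, hvi⟩, hvi⟩

theorem card_pattern_le (hX : Pairwise (Disjoint on X)) : #(pattern X D) ≤ #D := by
  have hdisj : (pattern X D : Set (Fin k)).PairwiseDisjoint fun i => D ∩ X i :=
    fun i _ j _ hij => (hX hij).mono inter_subset_right inter_subset_right
  calc
    #(pattern X D) ≤ #((pattern X D).biUnion fun i => D ∩ X i) :=
      card_le_card_biUnion hdisj fun i hi => (mem_filter.1 hi).2
    _ ≤ #D := card_le_card (biUnion_subset.2 fun _ _ => inter_subset_left)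

theorem univ_notMem_MI (hF : (F : Set (Finset ℕ)).Sized k) (hX : Pairwise (Disjoint on X)) :
    univ ∉ MI F X := by
  intro huniv
  obtain ⟨E, hE, E', hE', hne, hpat⟩ := mem_MI.1 huniv
  have hk : k ≤ #(E ∩ E') := by simpa [hpat] using card_pattern_le (D := E ∩ E') hX
  have hleft : E ∩ E' = E := eq_of_subset_of_card_le inter_subset_left ((hF hE).trans_le hk)
  have hright : E ∩ E' = E' := eq_of_subset_of_card_le inter_subset_right ((hF hE').trans_le hk)
  exact hne (hleft.symm.trans hright)

theorem exists_inter_eq_projJ_inter {s : ℕ} (hF : ∀ A ∈ F, #A ≤ s)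
    (hX : Pairwise (Disjoint on X)) (hE : #E ≤ s) (hJ : SStrong s F (projJ X J E))
    (hJ' : SStrong s F (projJ X J' E)) :
    ∃ A ∈ F, ∃ B ∈ F, A ∩ B = projJ X (J ∩ J') E := by
  obtain ⟨A, hA, hAE⟩ := hJ.exists_inter_eq hE
  obtain ⟨B, hB, hBA⟩ := hJ'.exists_inter_eq (hF A hA)
  refine ⟨A, hA, B, hB, ?_⟩
  calc
    A ∩ B = A ∩ projJ X J' E := by rw [inter_comm A B, hBA, inter_comm]
    _ = A ∩ E ∩ projJ X J' E := by rw [inter_assoc, inter_eq_right.2 projJ_subset]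
    _ = projJ X J E ∩ projJ X J' E := by rw [hAE, inter_eq_left.2 projJ_subset]
    _ = projJ X (J ∩ J') E := projJ_inter_projJ hX

end Pattern

theorem stmt_5_general {k s : ℕ} {F : Finset (Finset ℕ)} {X : Fin k → Finset ℕ} (hks : k ≤ s)
    (hF : (F : Set (Finset ℕ)).Sized k) (hpart : IsKPartition k F X)
    (hstrong : ∀ J ∈ MI F X, ∀ E ∈ F, SStrong s F (projJ X J E)) :
    ∀ J ∈ MI F X, ∀ J' ∈ MI F X, J ∩ J' ∈ MI F X := by
  intro J hJ J' hJ'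
  have hX := hpart.pairwise_disjoint
  have hcard : ∀ A ∈ F, #A ≤ s := fun A hA => (hF hA).trans_le hks
  obtain ⟨E, hE, -⟩ := mem_MI.1 hJ
  obtain ⟨A, hA, B, hB, hAB⟩ := exists_inter_eq_projJ_inter hcard hX (hcard E hE)
    (hstrong J hJ E hE) (hstrong J' hJ' E hE)
  have hpat : pattern X (A ∩ B) = J ∩ J' := by
    rw [hAB, pattern_projJ hX, hpart.pattern_eq_univ hE, inter_univ]
  refine mem_MI.2 ⟨A, hA, B, hB, ?_, hpat⟩
  rintro rfl
  rw [inter_self, hpart.pattern_eq_univ hA] at hpat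
  have hJuniv : J = univ := univ_subset_iff.1 (hpat.trans_subset inter_subset_left)
  exact univ_notMem_MI hF hX (hJuniv ▸ hJ)

/-- for an `s`-super-homogeneous `k`-partite `k`-graph, `MI(F)` is closed
under intersection. -/
theorem stmt_5 (k s n : ℕ) (hk : 2 ≤ k) (hs : 2 ≤ s) (hsk : 2 * k ≤ s)
    (F : Finset (Finset ℕ)) (X : Fin k → Finset ℕ)
    (hF : IsKGraphOn k n F) (hpart : IsKPartition k F X)
    (hsh : SuperHomogeneous n k s F X) :
    ∀ J ∈ MI F X, ∀ J' ∈ MI F X, J ∩ J' ∈ MI F X :=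
  stmt_5_general (by omega) (fun E hE => (hF E hE).2) hpart fun J hJ E hE => (hsh J hJ E hE).1
end

section
/- Let k ≥ 3 be an integer and let J be a family of proper subsets of [k] that is closed under intersection and has rank at least k−1. Then at least one of the following holds: (1) there exists B ⊆ [k] with |B| = k−2 such that every subset of B belongs to J; or (2) there exists a unique i ∈ [k] such that every proper subset D of [k] with i ∈ D belongs to J, and no subset D of [k] with i ∉ D and |D| ≥ k−2 belongs to J. -/
open Finset Filter

attribute [local instance] Classical.propDecidable

/-!
Closure under intersection puts a proper subset `S` into the family as soon as every point outside
`S` is missed by a member containing `S`. Since the rank is at least `k - 1`, every set `{x, y}ᶜ`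
lies in a member, which is `{x}ᶜ`, `{y}ᶜ` or `{x, y}ᶜ` because it is proper. If all the sets `{z}ᶜ`
are members, then so is every proper subset. Otherwise fix `x` with `{x}ᶜ` not a member: every
`z ≠ x` is then missed by a member `{z}ᶜ` or `{x, z}ᶜ`. If some `{x, y}ᶜ` is a member, all its
subsets are; if none is, every `{z}ᶜ` with `z ≠ x` is a member and `x` is the central index.
-/

section IntersectionClosed

variable {α : Type*} [Fintype α] [DecidableEq α] {𝒥 : Set (Finset α)} {S : Finset α} {x y : α}

theorem mem_of_forall_notMem_exists_superset (hclosed : InfClosed 𝒥) (hS : S ≠ univ)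
    (hsep : ∀ z ∉ S, ∃ J ∈ 𝒥, S ⊆ J ∧ z ∉ J) : S ∈ 𝒥 := by
  choose! J hJ𝒥 hSJ hzJ using hsep
  have hne : Sᶜ.Nonempty := (compl_ne_univ_iff_nonempty Sᶜ).1 (by rwa [compl_compl])
  have hinf : Sᶜ.inf' hne J = S := by
    ext w
    rw [mem_inf']
    refine ⟨fun hw => ?_, fun hw z hz => hSJ z (mem_compl.1 hz) hw⟩
    by_contra hwS
    exact hzJ w hwS (hw w (mem_compl.2 hwS))
  exact hinf ▸ hclosed.finsetInf'_mem hne fun z hz => hJ𝒥 z (mem_compl.1 hz)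

theorem mem_of_forall_compl_singleton_mem (hclosed : InfClosed 𝒥) (hS : S ≠ univ)
    (hcompl : ∀ z ∉ S, {z}ᶜ ∈ 𝒥) : S ∈ 𝒥 :=
  mem_of_forall_notMem_exists_superset hclosed hS fun z hz =>
    ⟨{z}ᶜ, hcompl z hz, subset_compl_singleton.2 hz, by simp⟩

theorem mem_of_subset_compl_pair (hclosed : InfClosed 𝒥) (hxy : {x, y}ᶜ ∈ 𝒥)
    (hdich : ∀ z ≠ x, {z}ᶜ ∈ 𝒥 ∨ {x, z}ᶜ ∈ 𝒥) (hS : S ⊆ {x, y}ᶜ) : S ∈ 𝒥 := by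
  have hxS : x ∉ S := fun h => by simpa using hS h
  refine mem_of_forall_notMem_exists_superset hclosed (fun h => hxS (h ▸ mem_univ x)) fun z hz => ?_
  obtain rfl | hzx := eq_or_ne z x
  · exact ⟨_, hxy, hS, by simp⟩
  obtain hmem | hmem := hdich z hzx
  · exact ⟨_, hmem, subset_compl_singleton.2 hz, by simp⟩
  · refine ⟨_, hmem, subset_compl_comm.1 ?_, by simp⟩
    simp [insert_subset_iff, hxS, hz]

theorem compl_singleton_or_compl_pair_mem (huniv : univ ∉ 𝒥) (hsub : ∃ J ∈ 𝒥, {x, y}ᶜ ⊆ J) :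
    {x}ᶜ ∈ 𝒥 ∨ {y}ᶜ ∈ 𝒥 ∨ {x, y}ᶜ ∈ 𝒥 := by
  obtain ⟨J, hJ, hsub⟩ := hsub
  have hcases : Jᶜ = ∅ ∨ Jᶜ = {x} ∨ Jᶜ = {y} ∨ Jᶜ = {x, y} := by
    have hcompl : Jᶜ ⊆ {x, y} := compl_le_iff_compl_le.1 hsub
    rw [← coe_subset, coe_pair, Set.subset_pair_iff_eq] at hcompl
    simpa only [← coe_inj, coe_empty, coe_singleton, coe_pair] using hcompl
  rcases hcases with h | h | h | h
  · exact absurd ((compl_eq_empty_iff J).1 h ▸ hJ) huniv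
  all_goals simp [← h, hJ]

theorem eq_compl_singleton_or_compl_pair (hx : x ∉ S) (hcard : Fintype.card α - 2 ≤ #S) :
    S = {x}ᶜ ∨ ∃ y ≠ x, S = {x, y}ᶜ := by
  refine or_iff_not_imp_left.2 fun hne => ?_
  have hssub : S ⊂ {x}ᶜ := (subset_compl_singleton.2 hx).ssubset_of_ne hne
  obtain ⟨y, hy, hyS⟩ := exists_of_ssubset hssub
  have hyx : y ≠ x := by simpa using hy
  refine ⟨y, hyx, eq_of_subset_of_card_le ?_ ?_⟩
  · exact subset_compl_comm.1 (by simp [insert_subset_iff, hx, hyS])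
  · rwa [card_compl, card_pair hyx.symm]

/-- `i` is the central index of a family of type 2: the family contains every proper subset through
`i`, and no subset avoiding `i` whose complement has at most two elements. -/
def IsCentralIndex (𝒥 : Set (Finset α)) (i : α) : Prop :=
  (∀ D : Finset α, D ≠ univ → i ∈ D → D ∈ 𝒥) ∧
    (∀ D : Finset α, i ∉ D → Fintype.card α - 2 ≤ #D → D ∉ 𝒥)

theorem IsCentralIndex.eq_of_compl_singleton_notMem {i : α} (hi : IsCentralIndex 𝒥 i)
    (hx : {x}ᶜ ∉ 𝒥) : i = x := by
  by_contra hix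
  have hne : {x}ᶜ ≠ univ := (compl_ne_univ_iff_nonempty _).2 (singleton_nonempty x)
  exact hx (hi.1 {x}ᶜ hne (by simpa using hix))

theorem isCentralIndex_of_compl_singleton_mem (hclosed : InfClosed 𝒥) (hx : {x}ᶜ ∉ 𝒥)
    (hpair : ∀ y ≠ x, {x, y}ᶜ ∉ 𝒥) (hsingleton : ∀ z ≠ x, {z}ᶜ ∈ 𝒥) : IsCentralIndex 𝒥 x := by
  refine ⟨fun D hD hxD => ?_, fun D hxD hcard => ?_⟩
  · exact mem_of_forall_compl_singleton_mem hclosed hD fun z hz =>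
      hsingleton z (ne_of_mem_of_not_mem hxD hz).symm
  · obtain rfl | ⟨y, hyx, rfl⟩ := eq_compl_singleton_or_compl_pair hxD hcard
    exacts [hx, hpair y hyx]

theorem stmt_7_general [Nontrivial α] (huniv : univ ∉ 𝒥) (hclosed : InfClosed 𝒥)
    (hrank : ∀ D : Finset α, #D < Fintype.card α - 1 → ∃ J ∈ 𝒥, D ⊆ J) :
    (∃ B : Finset α, #B = Fintype.card α - 2 ∧ ∀ S ⊆ B, S ∈ 𝒥) ∨
    (∃! i : α, IsCentralIndex 𝒥 i) := by
  have hcard_pair {x y : α} (hxy : x ≠ y) : #({x, y}ᶜ : Finset α) = Fintype.card α - 2 := by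
    rw [card_compl, card_pair hxy]
  by_cases hall : ∀ x : α, {x}ᶜ ∈ 𝒥
  · obtain ⟨x, y, hxy⟩ := exists_pair_ne α
    refine .inl ⟨{x, y}ᶜ, hcard_pair hxy, fun S => mem_of_subset_compl_pair hclosed ?_ ?_⟩
    · exact mem_of_forall_compl_singleton_mem hclosed
        ((compl_ne_univ_iff_nonempty _).2 (insert_nonempty x _)) fun z _ => hall z
    · exact fun z _ => .inl (hall z)
  push Not at hall
  obtain ⟨x, hx⟩ := hall
  have hdich : ∀ z ≠ x, {z}ᶜ ∈ 𝒥 ∨ {x, z}ᶜ ∈ 𝒥 := fun z hzx => by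
    have hlt : #({x, z}ᶜ : Finset α) < Fintype.card α - 1 := by
      have := Fintype.one_lt_card (α := α)
      rw [hcard_pair hzx.symm]
      omega
    exact (compl_singleton_or_compl_pair_mem huniv (hrank _ hlt)).resolve_left hx
  by_cases hpair : ∃ y ≠ x, {x, y}ᶜ ∈ 𝒥
  · obtain ⟨y, hyx, hxy⟩ := hpair
    exact .inl ⟨{x, y}ᶜ, hcard_pair hyx.symm, fun S => mem_of_subset_compl_pair hclosed hxy hdich⟩
  · push Not at hpair
    exact .inr ⟨x,
      isCentralIndex_of_compl_singleton_mem hclosed hx hpair fun z hzx =>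
        (hdich z hzx).resolve_right (hpair z hzx),
      fun i hi => hi.eq_of_compl_singleton_notMem hx⟩

end IntersectionClosed

theorem exists_superset_of_card_lt_rankFam {k : ℕ} {𝒥 : Finset (Finset (Fin k))}
    {D : Finset (Fin k)} (hD : #D < rankFam k 𝒥) : ∃ J ∈ 𝒥, D ⊆ J := by
  by_contra! hcon
  exact Nat.notMem_of_lt_sInf hD ⟨D, rfl, hcon⟩

/-- structure of intersection-closed families of proper subsets of `[k]` of
rank at least `k−1`: type 1 or type 2 (with a unique central index). -/
theorem stmt_7 (k : ℕ) (hk : 3 ≤ k) (𝒥 : Finset (Finset (Fin k)))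
    (hproper : ∀ J ∈ 𝒥, J ≠ Finset.univ)
    (hclosed : ∀ J ∈ 𝒥, ∀ J' ∈ 𝒥, J ∩ J' ∈ 𝒥)
    (hrank : k - 1 ≤ rankFam k 𝒥) :
    (∃ B : Finset (Fin k), B.card = k - 2 ∧ ∀ S ⊆ B, S ∈ 𝒥) ∨
    (∃! i : Fin k,
      (∀ D : Finset (Fin k), D ≠ Finset.univ → i ∈ D → D ∈ 𝒥) ∧
      (∀ D : Finset (Fin k), i ∉ D → k - 2 ≤ D.card → D ∉ 𝒥)) := by
  have : Nontrivial (Fin k) := Fin.nontrivial_iff_two_le.2 (by omega)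
  simpa only [IsCentralIndex, Fintype.card_fin, mem_coe] using
    stmt_7_general (𝒥 := (𝒥 : Set (Finset (Fin k))))
      (fun huniv => hproper univ huniv rfl) (fun J hJ J' hJ' => hclosed J hJ J' hJ')
      fun D hD => exists_superset_of_card_lt_rankFam ((Fintype.card_fin k ▸ hD).trans_le hrank)
end

section
/- Let k ≥ 2 be an integer and let F be a nonempty k-graph on [n]. Then F contains a nonempty subgraph F' with |F'| ≥ (1/2)·|F| such that for each i = 1,...,k−1, every i-element vertex set that is contained in at least one edge of F' is contained in at least (1/(2k))·|F|/C(n,i) edges of F'. -/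
open Finset Filter

attribute [local instance] Classical.propDecidable

/-!
Delete edges greedily: while some set `D` of an allowed size lies in an edge but has degree below
its threshold `w D`, remove every edge containing `D`. Afterwards `D` lies in no edge, so each `D`
is treated at most once, and in total at most `∑ w D` edges are lost. The threshold
`|F| / (2k * C(n, i))` for `i`-sets makes each size cost at most `|F| / (2k)`, hence the `k` sizes
below `k` cost at most `|F| / 2`.
-/

theorem exists_subset_forall_le_card_bipartiteAbove {α β R : Type*} [AddCommMonoidWithOne R]
    [LinearOrder R] [IsOrderedAddMonoid R] (r : α → β → Prop) [DecidableRel r] {w : α → R}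
    (T : Finset α) (hw : ∀ a ∈ T, 0 ≤ w a) (F : Finset β) :
    ∃ F' ⊆ F, (#F : R) ≤ #F' + ∑ a ∈ T, w a ∧
      ∀ a ∈ T, (∃ b ∈ F', r a b) → w a ≤ #(F'.bipartiteAbove r a) := by
  induction T using Finset.strongInduction generalizing F with
  | H T ih =>
    by_cases hgood : ∀ a ∈ T, (∃ b ∈ F, r a b) → w a ≤ #(F.bipartiteAbove r a)
    · exact ⟨F, Subset.rfl, le_add_of_nonneg_right (sum_nonneg hw), hgood⟩
    push Not at hgood
    obtain ⟨a, ha, -, hlt⟩ := hgood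
    obtain ⟨F', hF', hcard, hdeg⟩ := ih (T.erase a) (erase_ssubset ha)
      (fun b hb => hw b (mem_of_mem_erase hb)) {b ∈ F | ¬ r a b}
    refine ⟨F', hF'.trans (filter_subset _ _), ?_, fun c hc hcov => ?_⟩
    · calc (#F : R) = #(F.bipartiteAbove r a) + #{b ∈ F | ¬ r a b} := by
            rw [← Nat.cast_add, bipartiteAbove, card_filter_add_card_filter_not]
        _ ≤ w a + (#F' + ∑ c ∈ T.erase a, w c) := add_le_add hlt.le hcard
        _ = #F' + ∑ c ∈ T, w c := by rw [add_left_comm, add_sum_erase T w ha]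
    · have hne : c ≠ a := by
        rintro rfl
        obtain ⟨b, hb, hcb⟩ := hcov
        exact (mem_filter.1 (hF' hb)).2 hcb
      exact hdeg c (mem_erase.2 ⟨hne, hc⟩) hcov

lemma mul_div_le_of_nonneg {K : Type*} [Field K] [LinearOrder K] [IsStrictOrderedRing K]
    {a c : K} (hc : 0 ≤ c) : a * (c / a) ≤ c := by
  rw [mul_div_left_comm]
  exact mul_le_of_le_one_right hc (div_self_le_one a)

section Hypergraph

variable {α : Type} [DecidableEq α]

lemma setDeg_eq_uDeg (F : Finset (Finset α)) (D : Finset α) : setDeg F D = uDeg F D :=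
  card_image_of_injOn <| (superset_injOn_sdiff D).mono fun _ hE => (mem_filter.1 hE).2

theorem exists_subset_forall_le_uDeg {R : Type*} [Semiring R] [LinearOrder R]
    [IsOrderedAddMonoid R] {V : Finset α} {F : Finset (Finset α)} (hF : ∀ E ∈ F, E ⊆ V)
    (I : Finset ℕ) {w : ℕ → R} (hw : ∀ i ∈ I, 0 ≤ w i) :
    ∃ F' ⊆ F, (#F : R) ≤ #F' + ∑ i ∈ I, (#V).choose i * w i ∧
      ∀ D : Finset α, #D ∈ I → (∃ E ∈ F', D ⊆ E) → w #D ≤ uDeg F' D := by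
  obtain ⟨F', hF', hcard, hdeg⟩ := exists_subset_forall_le_card_bipartiteAbove
    (fun (D : Σ _ : ℕ, Finset α) E => D.2 ⊆ E) (w := fun D => w D.1)
    (I.sigma fun i => V.powersetCard i) (fun D hD => hw D.1 (mem_sigma.1 hD).1) F
  refine ⟨F', hF', ?_, fun D hD hcov => ?_⟩
  · simpa only [sum_sigma, sum_const, card_powersetCard, nsmul_eq_mul] using hcard
  · obtain ⟨E, hE, hDE⟩ := hcov
    have hDV : D ⊆ V := hDE.trans (hF E (hF' hE))
    exact hdeg ⟨#D, D⟩ (mem_sigma.2 ⟨hD, mem_powersetCard.2 ⟨hDV, rfl⟩⟩) ⟨E, hE, hDE⟩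

theorem stmt_9_general {V : Finset α} {F : Finset (Finset α)} (hF : ∀ E ∈ F, E ⊆ V)
    (hne : F.Nonempty) (k : ℕ) :
    ∃ F' ⊆ F, F'.Nonempty ∧ (#F : ℝ) / 2 ≤ #F' ∧
      ∀ D : Finset α, #D < k → (∃ E ∈ F', D ⊆ E) →
        1 / (2 * (k : ℝ)) * #F / (#V).choose #D ≤ setDeg F' D := by
  set c : ℝ := 1 / (2 * (k : ℝ)) * #F with hc
  have hc0 : 0 ≤ c := by positivity
  obtain ⟨F', hF', hcard, hdeg⟩ := exists_subset_forall_le_uDeg hF (range k)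
    (w := fun i => c / (#V).choose i) fun i _ => by positivity
  have hloss : ∑ i ∈ range k, ((#V).choose i : ℝ) * (c / (#V).choose i) ≤ #F / 2 := calc
    -- For `i > #V` the binomial coefficient vanishes and the summand is `0 * (c / 0) = 0`.
    _ ≤ ∑ _i ∈ range k, c := sum_le_sum fun i _ => mul_div_le_of_nonneg hc0
    _ = k * ((#F / 2 : ℝ) / k) := by rw [sum_const, card_range, nsmul_eq_mul, hc]; ring
    _ ≤ #F / 2 := mul_div_le_of_nonneg (by positivity)
  have hhalf : (#F : ℝ) / 2 ≤ #F' := by linarith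
  have hFpos : (0 : ℝ) < #F := mod_cast hne.card_pos
  have hF'pos : (0 : ℝ) < #F' := (half_pos hFpos).trans_le hhalf
  refine ⟨F', hF', card_pos.1 (mod_cast hF'pos), hhalf, fun D hD hcov => ?_⟩
  rw [setDeg_eq_uDeg]
  exact hdeg D (mem_range.2 hD) hcov

end Hypergraph

lemma card_vtx (n : ℕ) : #(vtx n) = n := by
  rw [vtx, Nat.card_Icc, Nat.add_sub_cancel]

/-- every nonempty `k`-graph contains a subgraph with at least half the edges
in which every `i`-set (`1 ≤ i ≤ k−1`) contained in an edge has degree at least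
`(1/(2k))·|F|/C(n,i)`. -/
theorem stmt_9 (k n : ℕ) (hk : 2 ≤ k) (F : Finset (Finset ℕ)) (hF : IsKGraphOn k n F)
    (hne : F.Nonempty) :
    ∃ F' ⊆ F, F'.Nonempty ∧ (F.card : ℝ) / 2 ≤ (F'.card : ℝ) ∧
      ∀ i : ℕ, 1 ≤ i → i ≤ k - 1 → ∀ D : Finset ℕ, D.card = i →
        (∃ E ∈ F', D ⊆ E) →
        (1 / (2 * (k : ℝ))) * (F.card : ℝ) / (n.choose i : ℝ) ≤ (setDeg F' D : ℝ) := by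
  obtain ⟨F', hF', hne', hhalf, hdeg⟩ := stmt_9_general (fun E hE => (hF E hE).1) hne k
  refine ⟨F', hF', hne', hhalf, ?_⟩
  rintro _ - hi D rfl hcov
  simpa only [card_vtx] using hdeg D (by lia) hcov
end

section
/- Let k, s, t be positive integers with k, s ≥ 2 and t ≥ 1, and let H be a k-tree with s vertices and t edges. Then there exists a constant η > 0 (depending on H) such that for all sufficiently large n the following holds: if F is a k-graph on [n] with |F| = a·C(n,k−1) and a ≥ 8s·k!, then F contains at least η·a^t·n^{s−t} copies of H (distinct subgraphs of F isomorphic to H). -/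
open Finset Filter

attribute [local instance] Classical.propDecidable

/-!
As long as some set of fewer than `k` vertices has positive but small degree, delete all edges
containing it. This costs less than `|F|` edges in total and leaves a nonempty `G ⊆ F` in which
every proper subset of an edge has degree of order at least `a · n ^ (k - 1 - i)`, `i` being its
size. At most half of these edges meet a prescribed set of at most `s` further vertices, as few
edges contain a given set of `i + 1` vertices and `a ≥ 8 s k!`. So `H` embeds greedily
into `G`: a leaf edge `E` meets the vertices already embedded in `i < k` vertices lying in its
parent, hence in a set whose image is a proper subset of an edge of `G`, and it can be placed in at
least a constant times `a · n ^ (k - 1 - i)` ways while creating `k - i` new vertices. Multiplying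
over the edges of `H` gives order `a ^ t * n ^ (s - t)` embeddings, and each copy of `H` is the
image of at most `s ^ s` of them.
-/

section VertexSet

variable {α β : Type} [DecidableEq α] [DecidableEq β] {H : Finset (Finset α)} {E : Finset α}

lemma subset_vertexSet (hE : E ∈ H) : E ⊆ vertexSet H :=
  le_sup (f := id) hE

lemma vertexSet_empty : vertexSet (∅ : Finset (Finset α)) = ∅ :=
  sup_empty

lemma vertexSet_insert (E : Finset α) (H : Finset (Finset α)) :
    vertexSet (insert E H) = E ∪ vertexSet H :=
  sup_insert

lemma vertexSet_image_image (φ : α → β) (H : Finset (Finset α)) :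
    vertexSet (H.image fun E => E.image φ) = (vertexSet H).image φ := by
  ext v
  simp only [vertexSet, Finset.mem_sup, mem_image, id]
  grind

end VertexSet

namespace IsKTree

variable {α : Type} [DecidableEq α] {k : ℕ}

lemma card_inter_vertexSet_lt {H : Finset (Finset α)} {E F : Finset α} (hH : IsKTree k H)
    (hEk : #E = k) (hE : E ∉ H) (hF : F ∈ H) (hint : E ∩ vertexSet H = E ∩ F) :
    #(E ∩ vertexSet H) < k := by
  have hne : E ∩ F ≠ E := fun h =>
    hE (eq_of_subset_of_card_le (inter_eq_left.1 h) (by rw [hEk, hH.2 F hF]) ▸ hF)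
  rw [hint, ← hEk]
  exact card_lt_card (inter_subset_left.ssubset_of_ne hne)

@[elab_as_elim]
theorem induction_on {motive : Finset (Finset α) → Prop} {H : Finset (Finset α)}
    (hH : IsKTree k H) (single : ∀ E, #E = k → motive {E})
    (grow : ∀ H E F, IsKTree k H → #E = k → E ∉ H → F ∈ H → E ∩ vertexSet H = E ∩ F →
      #(E ∩ vertexSet H) < k → motive H → motive (insert E H)) :
    motive H := by
  obtain ⟨htree, hunif⟩ := hH
  induction htree with
  | single E => exact single E (hunif E (mem_singleton_self E))
  | @grow H E F hH hE hF hint ih =>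
    have hHk : IsKTree k H := ⟨hH, fun A hA => hunif A (mem_insert_of_mem hA)⟩
    have hEk : #E = k := hunif E (mem_insert_self E H)
    exact grow H E F hHk hEk hE hF hint (hHk.card_inter_vertexSet_lt hEk hE hF hint) (ih hHk.2)

lemma card_le_card_vertexSet (hk : 0 < k) {H : Finset (Finset α)} (hH : IsKTree k H) :
    #H ≤ #(vertexSet H) := by
  refine hH.induction_on (fun E hE => ?_) fun H E F _ hEk hE _ _ hlt ih => ?_
  · rw [card_singleton, vertexSet, sup_singleton, id, hE]
    exact hk
  · rw [card_insert_of_notMem hE, vertexSet_insert]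
    have := card_union_add_card_inter E (vertexSet H)
    lia

end IsKTree

section Embeddings

lemma exists_injOn_extension {α β : Type*} [DecidableEq α] [DecidableEq β] [Nonempty β]
    {φ : α → β} {V E : Finset α} {A : Finset β}
    (hφ : Set.InjOn φ V) (hcard : #A = #E) (hA : A ∩ V.image φ = (E ∩ V).image φ) :
    ∃ ψ : α → β, Set.EqOn ψ φ V ∧ Set.InjOn ψ ↑(E ∪ V) ∧ E.image ψ = A := by
  have hnew : #(E \ V) = #(A \ V.image φ) := by
    have hold : #(A ∩ V.image φ) = #(E ∩ V) := by
      rw [hA, card_image_of_injOn (hφ.mono (coe_subset.2 inter_subset_right))]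
    have hE := card_sdiff_add_card_inter E V
    have hA := card_sdiff_add_card_inter A (V.image φ)
    lia
  obtain ⟨f, hf⟩ : ∃ f : α → β, Set.BijOn f ↑(E \ V) ↑(A \ V.image φ) :=
    (finite_toSet _).exists_bijOn_of_encard_eq <| by
      simp only [Set.encard_coe_eq_coe_finsetCard, hnew]
  set ψ := V.piecewise φ f
  have hψV : Set.EqOn ψ φ V := fun v hv => V.piecewise_eq_of_mem φ f hv
  have hψE : Set.EqOn ψ f ↑(E \ V) := fun v hv =>
    V.piecewise_eq_of_notMem φ f (mem_sdiff.1 hv).2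
  refine ⟨ψ, hψV, ?_, ?_⟩
  · rw [← sdiff_union_self_eq_union, coe_union,
      Set.injOn_union (disjoint_coe.2 sdiff_disjoint), hψE.injOn_iff, hψV.injOn_iff]
    refine ⟨hf.injOn, hφ, fun v hv w hw hvw => ?_⟩
    rw [hψE hv, hψV hw] at hvw
    exact (mem_sdiff.1 (hf.mapsTo hv)).2 (hvw ▸ mem_image_of_mem φ hw)
  · have hinter : (E ∩ V).image ψ = A ∩ V.image φ :=
      hA ▸ image_congr (hψV.mono (coe_subset.2 inter_subset_right))
    have hsdiff : (E \ V).image ψ = A \ V.image φ := by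
      rw [image_congr hψE]
      exact coe_injective (by rw [coe_image, hf.image_eq])
    calc E.image ψ = (E \ V ∪ E ∩ V).image ψ := by rw [sdiff_union_inter]
      _ = A := by rw [image_union, hsdiff, hinter, sdiff_union_inter]

variable {α β : Type} [DecidableEq α] [DecidableEq β] [Inhabited β]

/-- The embeddings of `H` into `G`: maps injective on the vertices of `H` and sending edges to
edges. Off the vertices of `H` they take the value `default`, so that there are finitely many and
each one is determined by its values at the vertices. -/
noncomputable def embeddings (H : Finset (Finset α)) (G : Finset (Finset β)) : Finset (α → β) :=
  (((vertexSet H).pi fun _ => vertexSet G).image fun f v =>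
    if hv : v ∈ vertexSet H then f v hv else default).filter fun φ =>
      Set.InjOn φ (vertexSet H) ∧ ∀ E ∈ H, E.image φ ∈ G

variable {H : Finset (Finset α)} {G : Finset (Finset β)} {φ : α → β}

lemma mem_embeddings :
    φ ∈ embeddings H G ↔
      Set.InjOn φ (vertexSet H) ∧ (∀ E ∈ H, E.image φ ∈ G) ∧ ∀ v ∉ vertexSet H, φ v = default := by
  simp only [embeddings, mem_filter, mem_image, Finset.mem_pi]
  constructor
  · rintro ⟨⟨f, -, rfl⟩, hinj, hmap⟩
    exact ⟨hinj, hmap, fun v hv => dif_neg hv⟩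
  · rintro ⟨hinj, hmap, hoff⟩
    refine ⟨⟨fun v _ => φ v, fun v hv => ?_, funext fun v => ?_⟩, hinj, hmap⟩
    · obtain ⟨E, hE, hvE⟩ := Finset.mem_sup.1 hv
      exact subset_vertexSet (hmap E hE) (mem_image_of_mem φ hvE)
    · split_ifs with hv
      · rfl
      · exact (hoff v hv).symm

lemma card_embeddings_le_pow (H : Finset (Finset α)) (G : Finset (Finset β)) :
    #(embeddings H G) ≤ #(vertexSet G) ^ #(vertexSet H) :=
  calc #(embeddings H G) ≤ #((vertexSet H).pi fun _ => vertexSet G) :=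
        (card_filter_le _ _).trans card_image_le
    _ = #(vertexSet G) ^ #(vertexSet H) := by rw [card_pi, prod_const]

lemma embeddings_mono (H : Finset (Finset α)) {G F : Finset (Finset β)} (hGF : G ⊆ F) :
    embeddings H G ⊆ embeddings H F := fun φ hφ => by
  rw [mem_embeddings] at hφ ⊢
  exact ⟨hφ.1, fun E hE => hGF (hφ.2.1 E hE), hφ.2.2⟩

lemma card_embeddings_empty (G : Finset (Finset β)) :
    #(embeddings (∅ : Finset (Finset α)) G) = 1 := by
  refine card_eq_one.2 ⟨default, ext fun φ => ?_⟩
  simp [mem_embeddings, vertexSet_empty, funext_iff]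

lemma exists_mem_embeddings_insert {E : Finset α} {A : Finset β} (hφ : φ ∈ embeddings H G)
    (hA : A ∈ G) (hcard : #A = #E)
    (hinter : A ∩ (vertexSet H).image φ = (E ∩ vertexSet H).image φ) :
    ∃ ψ ∈ embeddings (insert E H) G, Set.EqOn ψ φ (vertexSet H) ∧ E.image ψ = A := by
  obtain ⟨hinj, hmap, -⟩ := mem_embeddings.1 hφ
  obtain ⟨χ, hχφ, hχinj, hχE⟩ := exists_injOn_extension hinj hcard hinter
  set ψ := (E ∪ vertexSet H).piecewise χ default
  have hψχ : Set.EqOn ψ χ ↑(E ∪ vertexSet H) := fun v hv => piecewise_eq_of_mem _ _ _ hv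
  have hψφ : Set.EqOn ψ φ (vertexSet H) :=
    (hψχ.mono (coe_subset.2 subset_union_right)).trans hχφ
  have hψE : E.image ψ = A := by
    rw [image_congr (hψχ.mono (coe_subset.2 subset_union_left)), hχE]
  refine ⟨ψ, mem_embeddings.2 ?_, hψφ, hψE⟩
  rw [vertexSet_insert]
  refine ⟨hψχ.injOn_iff.2 hχinj, forall_mem_insert _ _ _ |>.2 ⟨hψE ▸ hA, fun F hF => ?_⟩,
    fun v hv => piecewise_eq_of_notMem _ _ _ hv⟩
  rw [image_congr (hψφ.mono (coe_subset.2 (subset_vertexSet hF)))]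
  exact hmap F hF

lemma card_embeddings_mul_le_card_embeddings_insert {E : Finset α} {m : ℝ}
    (hcard : ∀ A ∈ G, #A = #E)
    (hm : ∀ φ ∈ embeddings H G,
      m ≤ #{A ∈ G | A ∩ (vertexSet H).image φ = (E ∩ vertexSet H).image φ}) :
    #(embeddings H G) * m ≤ #(embeddings (insert E H) G) := by
  let IsExtension (φ ψ : α → β) : Prop := Set.EqOn ψ φ (vertexSet H)
  have many (φ) (hφ : φ ∈ embeddings H G) :
      m ≤ #((embeddings (insert E H) G).bipartiteAbove IsExtension φ) := by
    refine (hm φ hφ).trans (Nat.cast_le.2 ((card_le_card fun A hA => ?_).trans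
      (card_image_le (f := fun ψ : α → β => E.image ψ))))
    obtain ⟨hAG, hinter⟩ := mem_filter.1 hA
    obtain ⟨ψ, hψ, hψφ, hψE⟩ := exists_mem_embeddings_insert hφ hAG (hcard A hAG) hinter
    exact mem_image.2 ⟨ψ, (mem_bipartiteAbove _).2 ⟨hψ, hψφ⟩, hψE⟩
  have unique (ψ) (_ : ψ ∈ embeddings (insert E H) G) :
      (#((embeddings H G).bipartiteBelow IsExtension ψ) : ℝ) ≤ 1 := by
    refine Nat.cast_le_one.2 (card_le_one.2 fun φ hφ φ' hφ' => funext fun v => ?_)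
    obtain ⟨hφ, hψφ⟩ := (mem_bipartiteBelow _).1 hφ
    obtain ⟨hφ', hψφ'⟩ := (mem_bipartiteBelow _).1 hφ'
    by_cases hv : v ∈ vertexSet H
    · exact (hψφ hv).symm.trans (hψφ' hv)
    · rw [(mem_embeddings.1 hφ).2.2 v hv, (mem_embeddings.1 hφ').2.2 v hv]
  simpa only [nsmul_eq_mul, mul_one] using card_nsmul_le_card_nsmul IsExtension many unique

lemma card_embeddings_le_mul_card_copies (H : Finset (Finset α)) (F : Finset (Finset ℕ)) :
    #(embeddings H F) ≤ #(vertexSet H) ^ #(vertexSet H) * #(copies H F) := by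
  refine card_le_mul_card_image_of_maps_to (f := fun φ => H.image fun E => E.image φ)
    (fun φ hφ => ?_) _ fun K hK => ?_
  · obtain ⟨hinj, hmap, -⟩ := mem_embeddings.1 hφ
    exact mem_filter.2 ⟨mem_powerset.2 (image_subset_iff.2 hmap), φ, hinj, rfl⟩
  · obtain ⟨-, φ₀, -, rfl⟩ := mem_filter.1 hK
    set K := H.image fun E => E.image φ₀
    have hfibre : {φ ∈ embeddings H F | (H.image fun E => E.image φ) = K} ⊆ embeddings H K :=
      fun φ hφ => by
        obtain ⟨hφ, hφK⟩ := mem_filter.1 hφ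
        obtain ⟨hinj, -, hoff⟩ := mem_embeddings.1 hφ
        exact mem_embeddings.2
          ⟨hinj, fun E hE => hφK ▸ mem_image_of_mem (fun E => E.image φ) hE, hoff⟩
    calc _ ≤ #(vertexSet K) ^ #(vertexSet H) :=
          (card_le_card hfibre).trans (card_embeddings_le_pow H K)
      _ ≤ #(vertexSet H) ^ #(vertexSet H) := by
          rw [vertexSet_image_image]
          exact Nat.pow_le_pow_left card_image_le _

end Embeddings

section GreedyEmbedding

variable {α β : Type} [DecidableEq α] [DecidableEq β]

/-- The condition on an `(r + 1)`-graph `G` under which trees on at most `s` vertices embed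
greedily: if a set `D` of at most `r` vertices, contained in an edge of `G`, is part of a set `W`
of at most `s` vertices, then at least `x * y ^ (r - |D|)` edges of `G` meet `W` in exactly `D`. -/
def IsExtendable (r s : ℕ) (x y : ℝ) (G : Finset (Finset β)) : Prop :=
  ∀ D W : Finset β, D ⊆ W → #W ≤ s → #D ≤ r → (∃ A ∈ G, D ⊆ A) →
    x * y ^ (r - #D) ≤ #{A ∈ G | A ∩ W = D}

variable [Inhabited β] {r s : ℕ} {x y : ℝ} {G : Finset (Finset β)} {H : Finset (Finset α)}

lemma IsExtendable.card_embeddings_mul_le (hext : IsExtendable r s x y G)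
    (hG : ∀ A ∈ G, #A = r + 1) (hs : #(vertexSet H) ≤ s) {E : Finset α} (hE : #E = r + 1)
    (hlt : #(E ∩ vertexSet H) ≤ r)
    (hparent : ∀ φ ∈ embeddings H G, ∃ A ∈ G, (E ∩ vertexSet H).image φ ⊆ A) :
    #(embeddings H G) * (x * y ^ (r - #(E ∩ vertexSet H))) ≤ #(embeddings (insert E H) G) := by
  refine card_embeddings_mul_le_card_embeddings_insert (fun A hA => (hG A hA).trans hE.symm)
    fun φ hφ => ?_
  have hcard : #((E ∩ vertexSet H).image φ) = #(E ∩ vertexSet H) :=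
    card_image_of_injOn ((mem_embeddings.1 hφ).1.mono (coe_subset.2 inter_subset_right))
  rw [← hcard] at hlt ⊢
  exact hext _ _ (image_subset_image inter_subset_right) (card_image_le.trans hs) hlt
    (hparent φ hφ)

theorem IsKTree.le_card_embeddings (hH : IsKTree (r + 1) H) (hs : #(vertexSet H) ≤ s)
    (hx : 0 ≤ x) (hy : 0 ≤ y) (hG : ∀ A ∈ G, #A = r + 1) (hne : G.Nonempty)
    (hext : IsExtendable r s x y G) :
    x ^ #H * y ^ (#(vertexSet H) - #H) ≤ #(embeddings H G) := by
  revert hs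
  refine hH.induction_on (fun E hE _ => ?_) fun H E F hH hEk hE hF hint hlt ih hs => ?_
  · have hempty : E ∩ vertexSet ∅ = ∅ := by rw [vertexSet_empty, inter_empty]
    have hroot := hext.card_embeddings_mul_le (H := ∅) hG (by simp [vertexSet_empty]) hE
      (by simp [hempty]) fun φ _ => hne.imp fun A hA => ⟨hA, by simp [hempty]⟩
    rw [hempty, card_embeddings_empty] at hroot
    simpa [vertexSet, hE] using hroot
  · rw [vertexSet_insert] at hs ⊢
    have hV : #(vertexSet H) ≤ s := (card_le_card subset_union_right).trans hs
    have hleaf := hext.card_embeddings_mul_le hG hV hEk (Nat.le_of_lt_succ hlt) fun φ hφ =>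
      ⟨F.image φ, (mem_embeddings.1 hφ).2.1 F hF,
        image_subset_image (hint.trans_subset inter_subset_right)⟩
    have hexp : #(E ∪ vertexSet H) - #(insert E H) =
        (#(vertexSet H) - #H) + (r - #(E ∩ vertexSet H)) := by
      have hle := hH.card_le_card_vertexSet r.succ_pos
      have hunion := card_union_add_card_inter E (vertexSet H)
      have hinsert := card_insert_of_notMem hE
      lia
    calc x ^ #(insert E H) * y ^ (#(E ∪ vertexSet H) - #(insert E H))
        = (x ^ #H * y ^ (#(vertexSet H) - #H)) * (x * y ^ (r - #(E ∩ vertexSet H))) := by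
          rw [hexp, card_insert_of_notMem hE]; ring
      _ ≤ #(embeddings H G) * (x * y ^ (r - #(E ∩ vertexSet H))) := by
          gcongr; exact ih hV
      _ ≤ #(embeddings (insert E H) G) := hleaf

end GreedyEmbedding

section Cleaning

lemma exists_subset_forall_le_card_bipartiteAbove_s10 {ι γ : Type*} (R : ι → γ → Prop)
    [∀ i, DecidablePred (R i)] {w : ι → ℝ} {P : Finset ι} {F : Finset γ}
    (hw : ∀ i ∈ P, 0 ≤ w i) (hsum : ∑ i ∈ P, w i < #F) :
    ∃ G ⊆ F, G.Nonempty ∧ ∀ i ∈ P, (∃ A ∈ G, R i A) → w i ≤ #(G.bipartiteAbove R i) := by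
  induction P using Finset.strongInduction generalizing F with
  | H P ih =>
    by_cases hgood : ∀ i ∈ P, (∃ A ∈ F, R i A) → w i ≤ #(F.bipartiteAbove R i)
    · have hF : (0 : ℝ) < #F := (sum_nonneg hw).trans_lt hsum
      exact ⟨F, Subset.rfl, card_pos.1 (Nat.cast_pos.1 hF), hgood⟩
    push Not at hgood
    obtain ⟨i, hi, -, hlow⟩ := hgood
    have hcard : (#(F.bipartiteAbove R i) : ℝ) + #{A ∈ F | ¬ R i A} = #F := by
      exact_mod_cast card_filter_add_card_filter_not (s := F) (R i)
    have hsum' : ∑ j ∈ P.erase i, w j < #{A ∈ F | ¬ R i A} := by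
      linarith [add_sum_erase P w hi]
    obtain ⟨G, hGF, hne, hG⟩ :=
      ih (P.erase i) (erase_ssubset hi) (fun j hj => hw j (mem_of_mem_erase hj)) hsum'
    refine ⟨G, hGF.trans (filter_subset _ _), hne, fun j hj hjG => ?_⟩
    obtain rfl | hji := eq_or_ne j i
    · obtain ⟨A, hA, hjA⟩ := hjG
      exact absurd hjA (mem_filter.1 (hGF hA)).2
    · exact hG j (mem_erase.2 ⟨hji, hj⟩) hjG

lemma sum_choose_mul_choose_sub (n r : ℕ) :
    ∑ i ∈ range (r + 1), n.choose i * (n - i).choose (r - i) = 2 ^ r * n.choose r :=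
  calc ∑ i ∈ range (r + 1), n.choose i * (n - i).choose (r - i)
      = ∑ i ∈ range (r + 1), n.choose r * r.choose i :=
        sum_congr rfl fun _ hi => (Nat.choose_mul (mem_range_succ_iff.1 hi)).symm
    _ = 2 ^ r * n.choose r := by rw [← mul_sum, Nat.sum_range_choose, mul_comm]

variable {β : Type} [DecidableEq β] {U : Finset β}

lemma exists_subset_forall_le_uDeg_s10 {r : ℕ} {c : ℝ} {F : Finset (Finset β)} (hF : F ⊆ U.powerset)
    (hc : 0 ≤ c) (hcard : c * (2 ^ r * (#U).choose r) < #F) :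
    ∃ G ⊆ F, G.Nonempty ∧ ∀ D : Finset β, #D ≤ r → (∃ A ∈ G, D ⊆ A) →
      c * (#U - #D).choose (r - #D) ≤ uDeg G D := by
  have hsum : ∑ p ∈ (range (r + 1)).sigma fun i => powersetCard i U,
      c * ((#U - p.1).choose (r - p.1) : ℝ) < #F := by
    rw [sum_sigma]
    simp only [sum_const, card_powersetCard, nsmul_eq_mul, mul_left_comm _ c, ← mul_sum]
    exact lt_of_eq_of_lt (congrArg (c * ·) (mod_cast sum_choose_mul_choose_sub #U r)) hcard
  obtain ⟨G, hGF, hne, hG⟩ := exists_subset_forall_le_card_bipartiteAbove_s10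
    (fun (p : Σ _ : ℕ, Finset β) A => p.2 ⊆ A) (fun _ _ => by positivity) hsum
  refine ⟨G, hGF, hne, fun D hD hDG => hG ⟨#D, D⟩ ?_ hDG⟩
  obtain ⟨A, hA, hDA⟩ := hDG
  exact mem_sigma.2 ⟨mem_range_succ_iff.2 hD,
    mem_powersetCard.2 ⟨hDA.trans (mem_powerset.1 (hF (hGF hA))), rfl⟩⟩

end Cleaning

section Degrees

variable {β : Type} [DecidableEq β] {U : Finset β} {G : Finset (Finset β)}

lemma uDeg_le_choose {k : ℕ} (hG : G ⊆ powersetCard k U) (S : Finset β) :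
    uDeg G S ≤ (#U - #S).choose (k - #S) := by
  obtain hempty | ⟨A, hA⟩ := (G.filter fun A => S ⊆ A).eq_empty_or_nonempty
  · rw [uDeg, hempty, card_empty]
    exact Nat.zero_le _
  · obtain ⟨hAG, hSA⟩ := mem_filter.1 hA
    obtain ⟨hAU, hAk⟩ := mem_powersetCard.1 (hG hAG)
    rw [← card_filter_powersetCard_subset S U k (hSA.trans hAU) (hAk ▸ card_le_card hSA)]
    exact card_le_card (filter_subset_filter _ hG)

lemma uDeg_insert_le_choose {r : ℕ} (hG : G ⊆ powersetCard (r + 1) U) {D : Finset β} {v : β}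
    (hv : v ∉ D) : uDeg G (insert v D) ≤ (#U - #D).choose (r - #D) :=
  calc uDeg G (insert v D) ≤ (#U - (#D + 1)).choose (r + 1 - (#D + 1)) :=
        card_insert_of_notMem hv ▸ uDeg_le_choose hG _
    _ ≤ (#U - #D).choose (r - #D) := by
        rw [Nat.add_sub_add_right]
        exact Nat.choose_le_choose _ (by lia)

lemma uDeg_le_card_inter_eq_add_sum {D W : Finset β} (hDW : D ⊆ W) :
    uDeg G D ≤ #{A ∈ G | A ∩ W = D} + ∑ v ∈ W \ D, uDeg G (insert v D) := by
  have hcover : {A ∈ G | D ⊆ A} ⊆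
      {A ∈ G | A ∩ W = D} ∪ (W \ D).biUnion fun v => {A ∈ G | insert v D ⊆ A} := by
    intro A hA
    obtain ⟨hAG, hDA⟩ := mem_filter.1 hA
    by_cases hinter : A ∩ W ⊆ D
    · exact mem_union_left _ (mem_filter.2 ⟨hAG, hinter.antisymm (subset_inter hDA hDW)⟩)
    · obtain ⟨v, hvAW, hvD⟩ := not_subset.1 hinter
      obtain ⟨hvA, hvW⟩ := mem_inter.1 hvAW
      exact mem_union_right _ (mem_biUnion.2 ⟨v, mem_sdiff.2 ⟨hvW, hvD⟩,
        mem_filter.2 ⟨hAG, insert_subset hvA hDA⟩⟩)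
  calc uDeg G D ≤ _ := card_le_card hcover
    _ ≤ _ := (card_union_le _ _).trans (Nat.add_le_add_left card_biUnion_le _)

lemma half_pow_div_factorial_le_choose {n r i : ℕ} (hn : 2 * r ≤ n) (hi : i ≤ r) :
    ((n : ℝ) / 2) ^ (r - i) / r.factorial ≤ (n - i).choose (r - i) := by
  have hbase : (n : ℝ) / 2 ≤ ((n - i + 1 - (r - i) : ℕ) : ℝ) := by
    rw [div_le_iff₀ two_pos]
    exact_mod_cast (by lia : n ≤ (n - i + 1 - (r - i)) * 2)
  have hfact : (r - i).factorial ≤ r.factorial := Nat.factorial_le (Nat.sub_le r i)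
  calc ((n : ℝ) / 2) ^ (r - i) / r.factorial
      ≤ ((n - i + 1 - (r - i) : ℕ) : ℝ) ^ (r - i) / (r - i).factorial := by gcongr
    _ ≤ (n - i).choose (r - i) := Nat.pow_le_choose _ _

lemma isExtendable_of_le_uDeg {r s : ℕ} {c : ℝ} (hG : G ⊆ powersetCard (r + 1) U)
    (hU : 2 * r ≤ #U) (hc : 2 * s ≤ c)
    (hdeg : ∀ D : Finset β, #D ≤ r → (∃ A ∈ G, D ⊆ A) →
      c * (#U - #D).choose (r - #D) ≤ uDeg G D) :
    IsExtendable r s (c / (2 * r.factorial)) (#U / 2) G := by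
  intro D W hDW hW hD hDG
  set u := (#U - #D).choose (r - #D)
  have hbad : ∑ v ∈ W \ D, uDeg G (insert v D) ≤ s * u :=
    calc ∑ v ∈ W \ D, uDeg G (insert v D) ≤ #(W \ D) * u :=
          sum_le_card_nsmul _ _ _ fun v hv => uDeg_insert_le_choose hG (mem_sdiff.1 hv).2
      _ ≤ s * u := Nat.mul_le_mul_right u ((card_le_card sdiff_subset).trans hW)
  have hsplit : (uDeg G D : ℝ) ≤ #{A ∈ G | A ∩ W = D} + s * u := by
    exact_mod_cast (uDeg_le_card_inter_eq_add_sum hDW).trans (Nat.add_le_add_left hbad _)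
  have hhalf : (s : ℝ) * u ≤ c / 2 * u := by gcongr; linarith
  have hc0 : 0 ≤ c := (by positivity : (0 : ℝ) ≤ 2 * s).trans hc
  calc c / (2 * r.factorial) * ((#U : ℝ) / 2) ^ (r - #D)
      = c / 2 * (((#U : ℝ) / 2) ^ (r - #D) / r.factorial) := by ring
    _ ≤ c / 2 * u := by gcongr; exact half_pow_div_factorial_le_choose hU hD
    _ ≤ #{A ∈ G | A ∩ W = D} := by linarith [hdeg D hD hDG]

end Degrees

theorem IsKTree.le_mul_card_copies {α : Type} [DecidableEq α] {r : ℕ} {c : ℝ}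
    {H : Finset (Finset α)} (hH : IsKTree (r + 1) H) {U : Finset ℕ} {F : Finset (Finset ℕ)}
    (hF : F ⊆ powersetCard (r + 1) U) (hU : 2 * r ≤ #U) (hc : 2 * #(vertexSet H) ≤ c)
    (hcard : c * (2 ^ r * (#U).choose r) < #F) :
    (c / (2 * r.factorial)) ^ #H * ((#U : ℝ) / 2) ^ (#(vertexSet H) - #H) ≤
      #(vertexSet H) ^ #(vertexSet H) * #(copies H F) := by
  have hc0 : 0 ≤ c := (by positivity : (0 : ℝ) ≤ 2 * #(vertexSet H)).trans hc
  obtain ⟨G, hGF, hne, hdeg⟩ := exists_subset_forall_le_uDeg_s10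
    (fun A hA => mem_powerset.2 (mem_powersetCard.1 (hF hA)).1) hc0 hcard
  have hext := isExtendable_of_le_uDeg (hGF.trans hF) hU hc hdeg
  calc (c / (2 * r.factorial)) ^ #H * ((#U : ℝ) / 2) ^ (#(vertexSet H) - #H)
      ≤ #(embeddings H G) := hH.le_card_embeddings le_rfl (by positivity) (by positivity)
        (fun A hA => (mem_powersetCard.1 (hF (hGF hA))).2) hne hext
    _ ≤ #(embeddings H F) := by exact_mod_cast card_le_card (embeddings_mono H hGF)
    _ ≤ #(vertexSet H) ^ #(vertexSet H) * #(copies H F) := by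
        exact_mod_cast card_embeddings_le_mul_card_copies H F

lemma two_pow_le_factorial_succ (r : ℕ) : 2 ^ r ≤ (r + 1).factorial := by
  simpa [add_comm] using Nat.factorial_mul_pow_le_factorial (m := 1) (n := r)

/-- a `k`-graph with `a·C(n,k−1)` edges, `a ≥ 8s·k!`, contains at least
`η·a^t·n^{s−t}` copies of any `k`-tree with `s` vertices and `t` edges. -/
theorem stmt_10 {α : Type} [DecidableEq α] (k s t : ℕ) (hk : 2 ≤ k) (hs : 2 ≤ s) (ht : 1 ≤ t)
    (H : Finset (Finset α)) (hH : IsKTree k H)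
    (hvs : (vertexSet H).card = s) (hte : H.card = t) :
    ∃ η : ℝ, 0 < η ∧ ∃ n₀ : ℕ, ∀ n ≥ n₀, ∀ F : Finset (Finset ℕ), ∀ a : ℝ,
      IsKGraphOn k n F → (F.card : ℝ) = a * (n.choose (k - 1) : ℝ) →
      ((8 * s * Nat.factorial k : ℕ) : ℝ) ≤ a →
      η * a ^ t * (n : ℝ) ^ (s - t) ≤ ((copies H F).card : ℝ) := by
  obtain ⟨r, rfl⟩ : ∃ r, k = r + 1 := ⟨k - 1, by lia⟩
  subst hvs hte
  set s := #(vertexSet H)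
  refine ⟨(1 / (4 * (r + 1).factorial * (2 * r.factorial))) ^ #H * (1 / 2) ^ (s - #H) / s ^ s,
    by positivity, 2 * r, fun n hn F a hF hFa ha => ?_⟩
  have hvtx : #(vtx n) = n := by simp [vtx]
  have hFvtx : F ⊆ powersetCard (r + 1) (vtx n) := fun A hA => mem_powersetCard.2 (hF A hA)
  have hfact : (2 : ℝ) ^ r ≤ (r + 1).factorial := mod_cast two_pow_le_factorial_succ r
  have hchoose : (0 : ℝ) < n.choose r := by exact_mod_cast Nat.choose_pos (by lia)
  push_cast at ha
  have ha0 : 0 < a := lt_of_lt_of_le (by positivity) ha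
  have hc : 2 * (s : ℝ) ≤ a / (4 * (r + 1).factorial) := by
    rw [le_div_iff₀ (by positivity)]; linarith
  have hcard : a / (4 * (r + 1).factorial) * (2 ^ r * (#(vtx n)).choose r) < #F := by
    rw [hFa, hvtx, Nat.add_sub_cancel, ← mul_assoc, div_mul_eq_mul_div]
    gcongr
    rw [div_lt_iff₀ (by positivity)]
    nlinarith [pow_pos (two_pos (α := ℝ)) r]
  have hcopies := hH.le_mul_card_copies hFvtx (by rwa [hvtx]) hc hcard
  rw [hvtx] at hcopies
  calc _ = (a / (4 * (r + 1).factorial) / (2 * r.factorial)) ^ #H * ((n : ℝ) / 2) ^ (s - #H) /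
        s ^ s := by simp only [div_pow, mul_pow]; ring
    _ ≤ #(copies H F) := by
      rw [div_le_iff₀' (by positivity)]
      exact hcopies
end
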